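/- Suppose f satisfies the (2r,4r)-restricted strong convexity and smoothness properties with parameter δ ∈ [0,1). Fix Y* ∈ ℝ^{p×r}_*, set X* := Y*Y*ᵀ, κ* := σ_1(Y*)/σ_r(Y*) and N := sup{⟨B, ∇f(X*)⟩ : rank(B) ≤ r, ‖B‖_F ≤ 1}. Assume 0 ≤ μ ≤ 1/3, τ₀ := (1 − μ/κ*)² − 7μ/3 > 0, δ ≤ τ₀/(4(2(κ* + μ/κ*)² + 7μ/3)) and N ≤ τ₀·σ_r(Y*)²/4. If Ŷ ∈ ℝ^{p×r}_* satisfies d(Ŷ,Y*) ≤ μσ_r(Y*)/κ* and ∇f(ŶŶᵀ)Ŷ = 0 (i.e. [Ŷ] is a Riemannian first-order stationary point of h in this region), then: (i) any Ŷ' ∈ ℝ^{p×r}_* with d(Ŷ',Y*) ≤ μσ_r(Y*)/κ* and ∇f(Ŷ'Ŷ'ᵀ)Ŷ' = 0 satisfies Ŷ' = ŶQ for some Q ∈ O(r); and (ii) d(Ŷ,Y*) ≤ (2/(τ₀·σ_r(Y*)²))·‖∇f(X*)Y*‖_F ≤ (2‖Y*‖/(τ₀·σ_r(Y*)²))·N.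 -/

import Mathlib

open Matrix

/-- Trace inner product `⟨A,B⟩ = tr(AᵀB)`. -/
noncomputable def trInner {m n : ℕ} (A B : Matrix (Fin m) (Fin n) ℝ) : ℝ :=
  ∑ i, ∑ j, A i j * B i j

/-- Frobenius norm. -/
noncomputable def frob {m n : ℕ} (A : Matrix (Fin m) (Fin n) ℝ) : ℝ :=
  Real.sqrt (∑ i, ∑ j, (A i j) ^ 2)

open scoped Classical in
/-- The `i`-th largest eigenvalue (1-indexed, `1 ≤ i ≤ n`) of a Hermitian matrix; junk value 0
otherwise. -/
noncomputable def eigVal {n : ℕ} (A : Matrix (Fin n) (Fin n) ℝ) (i : ℕ) : ℝ :=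
  if hA : A.IsHermitian then
    if h : n - i < n then hA.eigenvalues (Tuple.sort hA.eigenvalues ⟨n - i, h⟩) else 0
  else 0

/-- The `i`-th largest singular value (1-indexed) of `Y`, so `sval Y 1 = ‖Y‖` (spectral norm)
and `sval Y r` is the least singular value. -/
noncomputable def sval {p r : ℕ} (Y : Matrix (Fin p) (Fin r) ℝ) (i : ℕ) : ℝ :=
  Real.sqrt (eigVal (Yᵀ * Y) i)

/-- `Q` is an orthogonal matrix. -/
def IsOrtho {r : ℕ} (Q : Matrix (Fin r) (Fin r) ℝ) : Prop := Qᵀ * Q = 1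

/-- The quotient distance `d(Y₁,Y₂) = min_{Q ∈ O(r)} ‖Y₂Q − Y₁‖_F`. -/
noncomputable def dOrth {p r : ℕ} (Y₁ Y₂ : Matrix (Fin p) (Fin r) ℝ) : ℝ :=
  sInf {c | ∃ Q : Matrix (Fin r) (Fin r) ℝ, IsOrtho Q ∧ c = frob (Y₂ * Q - Y₁)}

/-!
Only linear spaces of matrices of low rank matter. On such a space restricted strong convexity and
smoothness say that `f - ‖·‖² / 2` has a Hessian of size at most `δ`, so that `∇f` differs from the
identity by a `δ`-Lipschitz map. If two factors `Y₁`, `Y₂` are aligned, meaning that `Y₁ᵀY₂` is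
symmetric positive definite (the polar decomposition of `Y₁ᵀY₂` provides the rotation), then
`‖Y₁Y₁ᵀ - Y₂Y₂ᵀ‖` controls `‖Y₁ - Y₂‖`, and `Y ↦ ∇f(YYᵀ)Y` is strongly monotone between `Y₁` and
`Y₂`: the only term of the wrong sign is `⟪∇f(YYᵀ), (Y₁ - Y₂)(Y₁ - Y₂)ᵀ⟫`, which is small because
`N` is. Strong monotonicity between two stationary points forces them to agree up to rotation, and
between a stationary point and `Y*` it bounds their distance by `‖∇f(X*)Y*‖`.
-/

section Rank

variable {l m n : Type*} [Fintype l]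

/-- The matrices whose columns are combinations of the columns of `Y₁` and `Y₂`, a linear space of
matrices of low rank. -/
def colMultiples (n : Type*) (Y₁ Y₂ : Matrix m l ℝ) : Submodule ℝ (Matrix m n ℝ) :=
  LinearMap.range (mulLeftLinearMap n ℝ Y₁) ⊔ LinearMap.range (mulLeftLinearMap n ℝ Y₂)

/-- The matrices whose rows are combinations of the rows of `Y₁` and `Y₂`, a linear space of
matrices of low rank. -/
def rowMultiples (m : Type*) (Y₁ Y₂ : Matrix l n ℝ) : Submodule ℝ (Matrix m n ℝ) :=
  LinearMap.range (mulRightLinearMap m ℝ Y₁) ⊔ LinearMap.range (mulRightLinearMap m ℝ Y₂)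

theorem mul_mem_colMultiples_left (Y₁ Y₂ : Matrix m l ℝ) (A : Matrix l n ℝ) :
    Y₁ * A ∈ colMultiples n Y₁ Y₂ :=
  Submodule.mem_sup_left ⟨A, rfl⟩

theorem mul_mem_colMultiples_right (Y₁ Y₂ : Matrix m l ℝ) (A : Matrix l n ℝ) :
    Y₂ * A ∈ colMultiples n Y₁ Y₂ :=
  Submodule.mem_sup_right ⟨A, rfl⟩

theorem mul_mem_rowMultiples_left (A : Matrix m l ℝ) (Y₁ Y₂ : Matrix l n ℝ) :
    A * Y₁ ∈ rowMultiples m Y₁ Y₂ :=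
  Submodule.mem_sup_left ⟨A, rfl⟩

theorem mul_mem_rowMultiples_right (A : Matrix m l ℝ) (Y₁ Y₂ : Matrix l n ℝ) :
    A * Y₂ ∈ rowMultiples m Y₁ Y₂ :=
  Submodule.mem_sup_right ⟨A, rfl⟩

variable [Fintype n]

theorem rank_smul_le (c : ℝ) (A : Matrix m n ℝ) : (c • A).rank ≤ A.rank := by
  classical
  simpa using rank_mul_le_left A (c • (1 : Matrix n n ℝ))

theorem rank_mul_add_mul_le (A B : Matrix m l ℝ) (C D : Matrix l n ℝ) :
    (A * C + B * D).rank ≤ 2 * Fintype.card l := by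
  rw [← fromCols_mul_fromRows]
  refine (rank_mul_le_left _ _).trans ((rank_le_card_width _).trans_eq ?_)
  rw [Fintype.card_sum, two_mul]

theorem rank_le_of_mem_colMultiples {Y₁ Y₂ : Matrix m l ℝ} {X : Matrix m n ℝ}
    (hX : X ∈ colMultiples n Y₁ Y₂) : X.rank ≤ 2 * Fintype.card l := by
  obtain ⟨_, ⟨A, rfl⟩, _, ⟨B, rfl⟩, rfl⟩ := Submodule.mem_sup.1 hX
  exact rank_mul_add_mul_le Y₁ Y₂ A B

theorem rank_le_of_mem_rowMultiples {Y₁ Y₂ : Matrix l n ℝ} {X : Matrix m n ℝ}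
    (hX : X ∈ rowMultiples m Y₁ Y₂) : X.rank ≤ 2 * Fintype.card l := by
  obtain ⟨_, ⟨A, rfl⟩, _, ⟨B, rfl⟩, rfl⟩ := Submodule.mem_sup.1 hX
  exact rank_mul_add_mul_le A B Y₁ Y₂

end Rank

section SecondOrder

theorem norm_image_one_sub_taylor_le {F : Type*} [NormedAddCommGroup F] [NormedSpace ℝ F]
    {φ φ' φ'' : ℝ → F} {C : ℝ} (hφ : ∀ t, HasDerivAt φ (φ' t) t)
    (hφ' : ∀ t, HasDerivAt φ' (φ'' t) t) (hC : ∀ t, ‖φ'' t‖ ≤ C) :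
    ‖φ 1 - φ 0 - φ' 0‖ ≤ C / 2 := by
  have hφ'_le : ∀ t ∈ Set.Ico (0 : ℝ) 1, ‖φ' t - φ' 0‖ ≤ C * t := fun t ht => by
    simpa using norm_image_sub_le_of_norm_deriv_le_segment' (fun x _ => (hφ' x).hasDerivWithinAt)
      (fun x _ => hC x) t ⟨ht.1, le_rfl⟩
  have hψ (t : ℝ) : HasDerivAt (fun t => φ t - φ 0 - t • φ' 0) (φ' t - φ' 0) t :=
    (((hφ t).sub_const (φ 0)).sub ((hasDerivAt_id t).smul_const (φ' 0))).congr_deriv (by simp)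
  have hB (t : ℝ) : HasDerivAt (fun t => C * t ^ 2 / 2) (C * t) t :=
    (((hasDerivAt_pow 2 t).const_mul C).div_const 2).congr_deriv (by ring)
  simpa using image_norm_le_of_norm_deriv_right_le_deriv_boundary
    (fun t _ => (hψ t).continuousAt.continuousWithinAt) (fun t _ => (hψ t).hasDerivWithinAt)
    (by simp) hB hφ'_le (Set.right_mem_Icc.2 zero_le_one)

variable {E : Type*} [NormedAddCommGroup E] [InnerProductSpace ℝ E]

open scoped RealInnerProductSpace

-- Both base points are compared with `m ± z`, where `m` is their midpoint.
theorem inner_sub_le_add_of_abs_sub_sub_inner_le {K : Submodule ℝ E} {h : E → ℝ} {g : E → E}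
    {L : ℝ} (hL : ∀ x ∈ K, ∀ v ∈ K, |h (x + v) - h x - ⟪g x, v⟫| ≤ L / 2 * ‖v‖ ^ 2)
    {a b z : E} (ha : a ∈ K) (hb : b ∈ K) (hz : z ∈ K) :
    ⟪g a - g b, z⟫ ≤ L * (‖z‖ ^ 2 + ‖a - b‖ ^ 2 / 4) := by
  set c : E := (2⁻¹ : ℝ) • (b - a) with hc
  set m : E := (2⁻¹ : ℝ) • (a + b) with hm
  have hcK : c ∈ K := K.smul_mem _ (K.sub_mem hb ha)
  have ha_add : a + (z + c) = m + z := by rw [hc, hm]; module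
  have ha_sub : a + (-z + c) = m - z := by rw [hc, hm]; module
  have hb_add : b + (z - c) = m + z := by rw [hc, hm]; module
  have hb_sub : b + (-z - c) = m - z := by rw [hc, hm]; module
  have h₁ := hL a ha (z + c) (K.add_mem hz hcK)
  have h₂ := hL a ha (-z + c) (K.add_mem (K.neg_mem hz) hcK)
  have h₃ := hL b hb (z - c) (K.sub_mem hz hcK)
  have h₄ := hL b hb (-z - c) (K.sub_mem (K.neg_mem hz) hcK)
  have hnorm : ‖c‖ ^ 2 = ‖a - b‖ ^ 2 / 4 := by
    rw [hc, norm_smul, mul_pow, norm_sub_rev]; norm_num; ring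
  rw [ha_add, norm_add_sq_real, inner_add_right] at h₁
  rw [ha_sub, norm_add_sq_real, inner_add_right, inner_neg_left, inner_neg_right, norm_neg] at h₂
  rw [hb_add, norm_sub_sq_real, inner_sub_right] at h₃
  rw [hb_sub, norm_sub_sq_real, inner_sub_right, inner_neg_left, inner_neg_right, norm_neg] at h₄
  rw [inner_sub_left, ← hnorm]
  linarith [neg_le_of_abs_le h₁, le_of_abs_le h₂, le_of_abs_le h₃, neg_le_of_abs_le h₄]

theorem inner_sub_le_mul_of_abs_sub_sub_inner_le {K : Submodule ℝ E} {h : E → ℝ} {g : E → E}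
    {L : ℝ} (hL : ∀ x ∈ K, ∀ v ∈ K, |h (x + v) - h x - ⟪g x, v⟫| ≤ L / 2 * ‖v‖ ^ 2)
    {a b z : E} (ha : a ∈ K) (hb : b ∈ K) (hz : z ∈ K) :
    ⟪g a - g b, z⟫ ≤ L * ‖a - b‖ * ‖z‖ := by
  rcases eq_or_ne a b with rfl | hab
  · simp
  rcases eq_or_ne z 0 with rfl | hz0
  · simp
  have hd : 0 < ‖a - b‖ := norm_pos_iff.2 (sub_ne_zero.2 hab)
  have hn : 0 < ‖z‖ := norm_pos_iff.2 hz0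
  -- The scaling of `z` that minimises the right-hand side of the previous bound.
  set s : ℝ := ‖a - b‖ / (2 * ‖z‖) with hs
  have hspos : 0 < s := div_pos hd (mul_pos two_pos hn)
  have hle := inner_sub_le_add_of_abs_sub_sub_inner_le hL ha hb (K.smul_mem s hz)
  have hsz : ‖s • z‖ ^ 2 = ‖a - b‖ ^ 2 / 4 := by
    rw [norm_smul, Real.norm_of_nonneg hspos.le, hs]; field_simp; norm_num
  rw [inner_smul_right, hsz] at hle
  refine le_of_mul_le_mul_left (hle.trans_eq ?_) hspos
  rw [hs]; field_simp; ring

theorem hasDerivAt_add_smul_of_forall_hasLineDerivAt {F : E → ℝ} {F' : E → ℝ} {v : E}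
    (hF : ∀ x, HasLineDerivAt ℝ F (F' x) x v) (x : E) (t : ℝ) :
    HasDerivAt (fun s : ℝ => F (x + s • v)) (F' (x + t • v)) t := by
  have h := HasDerivAt.comp_sub_const t t (by rw [sub_self]; exact hF (x + t • v))
  exact h.congr_of_eventuallyEq (.of_forall fun s => congrArg F (by module))

theorem abs_sub_sub_sub_le_of_hasLineDerivAt {f : E → ℝ} {f' : E → E} {f'' : E → E → ℝ} {δ : ℝ}
    {K : Submodule ℝ E} (hf : ∀ x v, HasLineDerivAt ℝ f ⟪f' x, v⟫ x v)
    (hf' : ∀ x v, HasLineDerivAt ℝ (fun y => ⟪f' y, v⟫) (f'' x v) x v)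
    (hδ : ∀ x ∈ K, ∀ v ∈ K, (1 - δ) * ‖v‖ ^ 2 ≤ f'' x v ∧ f'' x v ≤ (1 + δ) * ‖v‖ ^ 2)
    {x v : E} (hx : x ∈ K) (hv : v ∈ K) :
    |f (x + v) - f x - ⟪f' x, v⟫ - ‖v‖ ^ 2 / 2| ≤ δ / 2 * ‖v‖ ^ 2 := by
  have hφ (t : ℝ) : HasDerivAt (fun t : ℝ => f (x + t • v) - t ^ 2 * (‖v‖ ^ 2 / 2))
      (⟪f' (x + t • v), v⟫ - t * ‖v‖ ^ 2) t :=
    ((hasDerivAt_add_smul_of_forall_hasLineDerivAt (hf · v) x t).sub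
      ((hasDerivAt_pow 2 t).mul_const _)).congr_deriv (by ring)
  have hφ' (t : ℝ) : HasDerivAt (fun t : ℝ => ⟪f' (x + t • v), v⟫ - t * ‖v‖ ^ 2)
      (f'' (x + t • v) v - ‖v‖ ^ 2) t :=
    ((hasDerivAt_add_smul_of_forall_hasLineDerivAt (hf' · v) x t).sub
      ((hasDerivAt_id t).mul_const _)).congr_deriv (by ring)
  have hφ'' (t : ℝ) : ‖f'' (x + t • v) v - ‖v‖ ^ 2‖ ≤ δ * ‖v‖ ^ 2 := by
    have h := hδ _ (K.add_mem hx (K.smul_mem t hv)) v hv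
    exact abs_le.2 ⟨by linarith [h.1], by linarith [h.2]⟩
  have hle := norm_image_one_sub_taylor_le hφ hφ' hφ''
  norm_num at hle
  convert hle using 2 <;> ring

theorem abs_inner_sub_sub_sub_le_of_hasLineDerivAt {f : E → ℝ} {f' : E → E} {f'' : E → E → ℝ}
    {δ : ℝ} {K : Submodule ℝ E} (hf : ∀ x v, HasLineDerivAt ℝ f ⟪f' x, v⟫ x v)
    (hf' : ∀ x v, HasLineDerivAt ℝ (fun y => ⟪f' y, v⟫) (f'' x v) x v)
    (hδ : ∀ x ∈ K, ∀ v ∈ K, (1 - δ) * ‖v‖ ^ 2 ≤ f'' x v ∧ f'' x v ≤ (1 + δ) * ‖v‖ ^ 2)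
    {a b z : E} (ha : a ∈ K) (hb : b ∈ K) (hz : z ∈ K) :
    |⟪f' a - f' b - (a - b), z⟫| ≤ δ * ‖a - b‖ * ‖z‖ := by
  -- Subtracting `‖·‖² / 2` from `f` subtracts the identity from its gradient.
  have hquad : ∀ x ∈ K, ∀ v ∈ K, |(f (x + v) - ‖x + v‖ ^ 2 / 2) - (f x - ‖x‖ ^ 2 / 2) -
      ⟪f' x - x, v⟫| ≤ δ / 2 * ‖v‖ ^ 2 := fun x hx v hv => by
    convert abs_sub_sub_sub_le_of_hasLineDerivAt hf hf' hδ hx hv using 2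
    rw [norm_add_sq_real, inner_sub_left]
    ring
  have hle {z : E} (hz : z ∈ K) : ⟪f' a - f' b - (a - b), z⟫ ≤ δ * ‖a - b‖ * ‖z‖ := by
    rw [sub_sub_sub_comm]
    exact inner_sub_le_mul_of_abs_sub_sub_inner_le (h := fun x => f x - ‖x‖ ^ 2 / 2)
      (g := fun x => f' x - x) hquad ha hb hz
  refine abs_le'.2 ⟨hle hz, ?_⟩
  simpa using hle (K.neg_mem hz)

end SecondOrder

section LowRankFactorization

open scoped MatrixOrder

section Polar

variable {n : Type*} [Fintype n] [DecidableEq n]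

theorem mul_mul_transpose_of_mem_orthogonalGroup {m : Type*} (A : Matrix m n ℝ) {Q : Matrix n n ℝ}
    (hQ : Q ∈ orthogonalGroup n ℝ) : A * Q * (A * Q)ᵀ = A * Aᵀ := by
  rw [transpose_mul, Matrix.mul_assoc, ← Matrix.mul_assoc Q, (mem_orthogonalGroup_iff n ℝ).1 hQ,
    Matrix.one_mul]

theorem exists_mem_orthogonalGroup_smul_one_le_mul {M : Matrix n n ℝ} {c : ℝ} (hc : 0 < c)
    (hM : c ^ 2 • 1 ≤ M * Mᵀ) : ∃ Q ∈ orthogonalGroup n ℝ, c • 1 ≤ M * Q := by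
  -- The polar decomposition `M = P * Qᵀ`, with `P` the square root of `M * Mᵀ`.
  set P : Matrix n n ℝ := CFC.sqrt (M * Mᵀ)
  have hMM : (M * Mᵀ).PosSemidef := posSemidef_self_mul_conjTranspose M
  have hP0 : 0 ≤ P := CFC.sqrt_nonneg _
  have hPP : P * P = M * Mᵀ := CFC.sqrt_mul_sqrt_self _ (nonneg_iff_posSemidef.2 hMM)
  have hPh : P.IsHermitian := (nonneg_iff_posSemidef.1 hP0).isHermitian
  have hPt : Pᵀ = P := hPh
  have hspec : ∀ x ∈ spectrum ℝ P, c ≤ x := fun x hx => by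
    rw [← Algebra.algebraMap_eq_smul_one, algebraMap_le_iff_le_spectrum hMM.isHermitian] at hM
    refine le_of_sq_le_sq (hM (x ^ 2) ?_) (spectrum_nonneg_of_nonneg hP0 hx)
    rw [← hPP, ← pow_two]
    exact spectrum.pow_mem_pow P 2 hx
  have hPunit : IsUnit P := (spectrum.zero_notMem_iff ℝ).1 fun h => (hspec 0 h).not_gt hc
  have hMunit : IsUnit M.det := by
    have h := (isUnit_iff_isUnit_det _).1 (hPunit.mul hPunit)
    rw [hPP, det_mul] at h
    exact isUnit_of_mul_isUnit_left h
  refine ⟨M⁻¹ * P, (mem_orthogonalGroup_iff n ℝ).2 ?_, ?_⟩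
  · rw [transpose_mul, hPt, Matrix.mul_assoc, ← Matrix.mul_assoc P, hPP, transpose_nonsing_inv,
      Matrix.mul_assoc, mul_nonsing_inv _ (by rwa [det_transpose]), Matrix.mul_one,
      nonsing_inv_mul _ hMunit]
  · rwa [mul_nonsing_inv_cancel_left _ _ hMunit, ← Algebra.algebraMap_eq_smul_one,
      algebraMap_le_iff_le_spectrum hPh]

end Polar

open scoped Matrix.Norms.Frobenius RealInnerProductSpace

/-- The trace inner product `⟪A, B⟫ = tr (Aᵀ * B)`, which induces the Frobenius norm. It is local
because Mathlib fixes no norm on matrices. -/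
noncomputable local instance frobeniusInnerProductSpace {m n : Type*} [Fintype m] [Fintype n] :
    InnerProductSpace ℝ (Matrix m n ℝ) where
  inner A B := trace (Aᵀ * B)
  norm_sq_eq_re_inner A := by
    rw [frobenius_norm_def, ← Real.sqrt_eq_rpow, Real.sq_sqrt (by positivity)]
    simp [trace, mul_apply, Finset.sum_comm (γ := m), pow_two]
  conj_inner_symm A B := by
    rw [← trace_transpose]; simp
  add_left A B C := by simp [Matrix.add_mul]
  smul_left A B c := by simp

variable {l m n : Type*} [Fintype l] [Fintype m] [Fintype n]

section TraceInner

theorem inner_eq_trace (A B : Matrix m n ℝ) : ⟪A, B⟫ = trace (Aᵀ * B) := rfl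

theorem inner_mul_left_eq (A : Matrix m l ℝ) (B : Matrix l n ℝ) (C : Matrix m n ℝ) :
    ⟪A * B, C⟫ = ⟪B, Aᵀ * C⟫ := by
  simp only [inner_eq_trace, transpose_mul, Matrix.mul_assoc]

theorem inner_mul_right_eq (A : Matrix m l ℝ) (B : Matrix l n ℝ) (C : Matrix m n ℝ) :
    ⟪A * B, C⟫ = ⟪A, C * Bᵀ⟫ := by
  simp only [inner_eq_trace, transpose_mul, Matrix.mul_assoc]
  rw [trace_mul_comm, Matrix.mul_assoc]

variable [DecidableEq n]

theorem norm_mul_of_mem_orthogonalGroup (A : Matrix m n ℝ) {Q : Matrix n n ℝ}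
    (hQ : Q ∈ orthogonalGroup n ℝ) : ‖A * Q‖ = ‖A‖ := by
  rw [norm_eq_sqrt_real_inner, inner_mul_right_eq, Matrix.mul_assoc,
    (mem_orthogonalGroup_iff n ℝ).1 hQ, Matrix.mul_one, ← norm_eq_sqrt_real_inner]

end TraceInner

section Loewner

theorem inner_mul_le_inner_mul_of_le {A B : Matrix m m ℝ} (h : A ≤ B) (Z : Matrix m n ℝ) :
    ⟪Z, A * Z⟫ ≤ ⟪Z, B * Z⟫ := by
  have h := ((Matrix.le_iff.1 h).conjTranspose_mul_mul_same Z).trace_nonneg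
  rwa [conjTranspose_eq_transpose_of_trivial, Matrix.mul_assoc, ← inner_eq_trace, Matrix.sub_mul,
    inner_sub_right, sub_nonneg] at h

theorem le_of_forall_inner_mul_le {A B : Matrix n n ℝ} (hA : A.IsHermitian) (hB : B.IsHermitian)
    (h : ∀ x : Matrix n Unit ℝ, ⟪x, A * x⟫ ≤ ⟪x, B * x⟫) : A ≤ B := by
  refine Matrix.le_iff.2 (.of_dotProduct_mulVec_nonneg (hB.sub hA) fun x => ?_)
  have hx := h (replicateCol Unit x)
  simp only [← replicateCol_mulVec, inner_eq_trace, transpose_replicateCol, trace,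
    diag_apply, Finset.univ_unique, Finset.sum_singleton] at hx
  rw [star_trivial, sub_mulVec, dotProduct_sub]
  exact sub_nonneg.2 hx

variable [DecidableEq n]

theorem mul_norm_le_norm_mul_of_smul_one_le {Y : Matrix m n ℝ} {a : ℝ}
    (h : a ^ 2 • 1 ≤ Yᵀ * Y) (Z : Matrix n l ℝ) : a * ‖Z‖ ≤ ‖Y * Z‖ := by
  have h := inner_mul_le_inner_mul_of_le h Z
  rw [Matrix.smul_mul, Matrix.one_mul, inner_smul_right, real_inner_self_eq_norm_sq,
    Matrix.mul_assoc, ← inner_mul_left_eq, real_inner_self_eq_norm_sq, ← mul_pow] at h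
  exact le_of_sq_le_sq h (norm_nonneg _)

theorem norm_mul_le_mul_norm_of_le_smul_one {Y : Matrix m n ℝ} {s : ℝ} (hs : 0 ≤ s)
    (h : Yᵀ * Y ≤ s ^ 2 • 1) (Z : Matrix n l ℝ) : ‖Y * Z‖ ≤ s * ‖Z‖ := by
  have h := inner_mul_le_inner_mul_of_le h Z
  rw [Matrix.smul_mul, Matrix.one_mul, inner_smul_right, real_inner_self_eq_norm_sq,
    Matrix.mul_assoc, ← inner_mul_left_eq, real_inner_self_eq_norm_sq, ← mul_pow] at h
  exact le_of_sq_le_sq h (by positivity)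

theorem norm_mul_transpose_sub_add_norm_mul_transpose_sub_le {Y Y' : Matrix m n ℝ} {s ρ : ℝ}
    (hs : 0 ≤ s) (hY : Yᵀ * Y ≤ s ^ 2 • 1) (hYY' : ‖Y - Y'‖ ≤ ρ) :
    ‖Y * Yᵀ - Y' * Yᵀ‖ + ‖Y' * Yᵀ - Y' * Y'ᵀ‖ ≤ (2 * s + ρ) * ρ := by
  have hmul : ‖Y * (Y - Y')ᵀ‖ ≤ s * ρ := by
    refine (norm_mul_le_mul_norm_of_le_smul_one hs hY _).trans ?_
    rw [frobenius_norm_transpose]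
    exact mul_le_mul_of_nonneg_left hYY' hs
  have hrow : ‖Y * Yᵀ - Y' * Yᵀ‖ ≤ s * ρ := by
    rwa [← Matrix.sub_mul, ← frobenius_norm_transpose, transpose_mul, transpose_transpose]
  have hcol : ‖Y' * Yᵀ - Y' * Y'ᵀ‖ ≤ s * ρ + ρ * ρ := by
    have hsq : ‖(Y - Y') * (Y - Y')ᵀ‖ ≤ ρ * ρ := by
      refine (frobenius_norm_mul _ _).trans ?_
      rw [frobenius_norm_transpose]
      exact mul_self_le_mul_self (norm_nonneg _) hYY'
    calc ‖Y' * Yᵀ - Y' * Y'ᵀ‖ = ‖Y * (Y - Y')ᵀ - (Y - Y') * (Y - Y')ᵀ‖ := by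
          rw [← Matrix.mul_sub, ← transpose_sub, ← Matrix.sub_mul, sub_sub_cancel]
      _ ≤ s * ρ + ρ * ρ := (norm_sub_le _ _).trans (add_le_add hmul hsq)
  linarith

theorem mul_norm_sq_le_inner_mul_mul_of_norm_sub_le {Y Y₁ Y₂ : Matrix m n ℝ} {σ ρ : ℝ}
    (hY : σ ^ 2 • 1 ≤ Yᵀ * Y) (hρσ : 2 * ρ ≤ σ) (h₁ : ‖Y - Y₁‖ ≤ ρ) (h₂ : ‖Y - Y₂‖ ≤ ρ)
    (Z : Matrix n l ℝ) : (σ - ρ) ^ 2 * ‖Z‖ ^ 2 ≤ ⟪Y₁ * Z, Y₂ * Z⟫ := by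
  set e := ‖(Y - Y₁) + (Y - Y₂)‖
  set d := ‖(Y - Y₁) - (Y - Y₂)‖ with hd
  have he_nonneg : 0 ≤ e := norm_nonneg _
  have he_le : e ≤ 2 * ρ := (norm_add_le _ _).trans (by linarith)
  have hparallelogram : e ^ 2 + d ^ 2 ≤ 4 * ρ ^ 2 := by
    have h := parallelogram_law_with_norm ℝ (Y - Y₁) (Y - Y₂)
    have := mul_self_le_mul_self (norm_nonneg _) h₁
    have := mul_self_le_mul_self (norm_nonneg _) h₂
    linarith
  have hadd : (2 * σ - e) * ‖Z‖ ≤ ‖Y₁ * Z + Y₂ * Z‖ := by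
    have h := norm_sub_norm_le ((2 : ℝ) • (Y * Z)) (((Y - Y₁) + (Y - Y₂)) * Z)
    rw [norm_smul, Real.norm_two] at h
    rw [show Y₁ * Z + Y₂ * Z = (2 : ℝ) • (Y * Z) - ((Y - Y₁) + (Y - Y₂)) * Z by
      simp only [Matrix.add_mul, Matrix.sub_mul]; module]
    linarith [mul_norm_le_norm_mul_of_smul_one_le hY Z,
      frobenius_norm_mul ((Y - Y₁) + (Y - Y₂)) Z]
  have hsub : ‖Y₁ * Z - Y₂ * Z‖ ≤ d * ‖Z‖ := by
    rw [norm_sub_rev, ← Matrix.sub_mul, hd, sub_sub_sub_cancel_left]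
    exact frobenius_norm_mul _ _
  have hadd_sq := pow_le_pow_left₀ (by have := norm_nonneg Z; nlinarith) hadd 2
  have hsub_sq := pow_le_pow_left₀ (norm_nonneg _) hsub 2
  rw [norm_add_sq_real, mul_pow] at hadd_sq
  rw [norm_sub_sq_real, mul_pow] at hsub_sq
  have hcoef : 4 * (σ - ρ) ^ 2 ≤ (2 * σ - e) ^ 2 - d ^ 2 := by
    nlinarith
  have := mul_le_mul_of_nonneg_right hcoef (sq_nonneg ‖Z‖)
  linarith

theorem mul_norm_le_norm_mul_add_transpose_of_smul_one_le {Y Y' : Matrix m n ℝ} {a : ℝ}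
    (h : a ^ 2 • 1 ≤ Yᵀ * Y') (Z : Matrix l n ℝ) : 2 * a * ‖Z‖ ≤ ‖Z * (Y + Y')ᵀ‖ := by
  have h := inner_mul_le_inner_mul_of_le h Zᵀ
  rw [Matrix.smul_mul, Matrix.one_mul, inner_smul_right, real_inner_self_eq_norm_sq,
    Matrix.mul_assoc, real_inner_comm, inner_mul_left_eq, transpose_transpose, real_inner_comm,
    frobenius_norm_transpose] at h
  rw [← frobenius_norm_transpose (Z * _), transpose_mul, transpose_transpose, Matrix.add_mul]
  refine le_of_sq_le_sq ?_ (norm_nonneg _)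
  have := norm_add_sq_real (Y * Zᵀ) (Y' * Zᵀ)
  have := norm_sub_sq_real (Y * Zᵀ) (Y' * Zᵀ)
  nlinarith [sq_nonneg ‖Y * Zᵀ - Y' * Zᵀ‖]

theorem exists_mem_orthogonalGroup_smul_one_le_mul_of_inner {M : Matrix n n ℝ} {c : ℝ} (hc : 0 < c)
    (hM : ∀ x : Matrix n Unit ℝ, c * ‖x‖ ^ 2 ≤ ⟪x, M * x⟫) :
    ∃ Q ∈ orthogonalGroup n ℝ, c • 1 ≤ M * Q := by
  have hle (x : Matrix n Unit ℝ) : c * ‖x‖ ≤ ‖Mᵀ * x‖ := by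
    rcases eq_or_ne x 0 with rfl | hx
    · simp
    have h : ⟪x, M * x⟫ ≤ ‖Mᵀ * x‖ * ‖x‖ := by
      rw [real_inner_comm, inner_mul_left_eq, real_inner_comm]
      exact real_inner_le_norm _ _
    exact le_of_mul_le_mul_right (by linarith [hM x]) (norm_pos_iff.2 hx)
  refine exists_mem_orthogonalGroup_smul_one_le_mul hc <| le_of_forall_inner_mul_le
    (isHermitian_one.smul (.all _)) (isHermitian_mul_conjTranspose_self M) fun x => ?_
  rw [Matrix.smul_mul, Matrix.one_mul, inner_smul_right, real_inner_self_eq_norm_sq,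
    Matrix.mul_assoc, real_inner_comm, inner_mul_left_eq, real_inner_self_eq_norm_sq, ← mul_pow]
  exact pow_le_pow_left₀ (by positivity) (hle x) 2

end Loewner

section KyFan

/-- The Ky Fan `2`-`k`-norm of `A`, that is, the Frobenius norm of the best approximation of `A` of
rank at most `k`, in its dual form. -/
noncomputable def kyFanTwoNorm (k : ℕ) (A : Matrix m n ℝ) : ℝ :=
  sSup {c | ∃ B : Matrix m n ℝ, B.rank ≤ k ∧ ‖B‖ ≤ 1 ∧ c = ⟪B, A⟫}

theorem inner_le_kyFanTwoNorm {k : ℕ} {A B : Matrix m n ℝ} (hB : B.rank ≤ k) (hB1 : ‖B‖ ≤ 1) :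
    ⟪B, A⟫ ≤ kyFanTwoNorm k A := by
  refine le_csSup ⟨‖A‖, ?_⟩ ⟨B, hB, hB1, rfl⟩
  rintro _ ⟨C, -, hC, rfl⟩
  exact (real_inner_le_norm C A).trans (mul_le_of_le_one_left (norm_nonneg A) hC)

theorem kyFanTwoNorm_nonneg (k : ℕ) (A : Matrix m n ℝ) : 0 ≤ kyFanTwoNorm k A := by
  simpa using inner_le_kyFanTwoNorm (k := k) (A := A) (B := 0) (by simp) (by simp)

theorem inner_le_kyFanTwoNorm_mul_norm {k : ℕ} (A : Matrix m n ℝ) {B : Matrix m n ℝ}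
    (hB : B.rank ≤ k) : ⟪B, A⟫ ≤ kyFanTwoNorm k A * ‖B‖ := by
  rcases eq_or_ne B 0 with rfl | hB0
  · simp
  have hpos : 0 < ‖B‖ := norm_pos_iff.2 hB0
  have h := inner_le_kyFanTwoNorm (A := A) (B := ‖B‖⁻¹ • B)
    ((rank_smul_le _ _).trans hB) (by rw [norm_smul, norm_inv, norm_norm, inv_mul_cancel₀ hpos.ne'])
  rwa [real_inner_smul_left, inv_mul_le_iff₀' hpos] at h

theorem abs_inner_le_kyFanTwoNorm_mul_norm {k : ℕ} (A : Matrix m n ℝ) {B : Matrix m n ℝ}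
    (hB : B.rank ≤ k) : |⟪B, A⟫| ≤ kyFanTwoNorm k A * ‖B‖ := by
  refine abs_le'.2 ⟨inner_le_kyFanTwoNorm_mul_norm A hB, ?_⟩
  have hneg : (-B).rank ≤ k := by simpa using (rank_smul_le (-1) B).trans hB
  simpa using inner_le_kyFanTwoNorm_mul_norm A hneg

theorem norm_mul_le_mul_kyFanTwoNorm [DecidableEq n] (A : Matrix l m ℝ) {Y : Matrix m n ℝ} {s : ℝ}
    (hs : 0 ≤ s) (hY : Yᵀ * Y ≤ s ^ 2 • 1) :
    ‖A * Y‖ ≤ s * kyFanTwoNorm (Fintype.card n) A := by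
  rcases eq_or_ne (A * Y) 0 with h0 | h0
  · simpa [h0] using mul_nonneg hs (kyFanTwoNorm_nonneg _ _)
  have hnorm : ‖A * Y * Yᵀ‖ ≤ s * ‖A * Y‖ := by
    rw [← frobenius_norm_transpose, transpose_mul, transpose_transpose,
      ← frobenius_norm_transpose (A * Y)]
    exact norm_mul_le_mul_norm_of_le_smul_one hs hY _
  have hrank : (A * Y * Yᵀ).rank ≤ Fintype.card n :=
    (rank_mul_le_left _ _).trans (rank_le_card_width _)
  refine le_of_mul_le_mul_right ?_ (norm_pos_iff.2 h0)
  calc ‖A * Y‖ * ‖A * Y‖ = ⟪A * Y * Yᵀ, A⟫ := by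
        rw [← real_inner_self_eq_norm_mul_norm, inner_mul_right_eq _ Yᵀ, transpose_transpose]
    _ ≤ kyFanTwoNorm (Fintype.card n) A * ‖A * Y * Yᵀ‖ := inner_le_kyFanTwoNorm_mul_norm A hrank
    _ ≤ kyFanTwoNorm (Fintype.card n) A * (s * ‖A * Y‖) :=
        mul_le_mul_of_nonneg_left hnorm (kyFanTwoNorm_nonneg _ _)
    _ = s * kyFanTwoNorm (Fintype.card n) A * ‖A * Y‖ := by ring

end KyFan

section NearIdentity

/-- On every space of matrices of rank at most `k`, the field `g` differs from the identity by a
`δ`-Lipschitz map. This is what restricted strong convexity and smoothness with parameter `δ` say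
about a gradient. -/
def RankNearIdentity (k : ℕ) (δ : ℝ) (g : Matrix m n ℝ → Matrix m n ℝ) : Prop :=
  ∀ K : Submodule ℝ (Matrix m n ℝ), (∀ X ∈ K, X.rank ≤ k) → ∀ A ∈ K, ∀ B ∈ K, ∀ Z ∈ K,
    |⟪g A - g B - (A - B), Z⟫| ≤ δ * ‖A - B‖ * ‖Z‖

theorem rankNearIdentity_of_hasLineDerivAt {k : ℕ} {δ : ℝ} {f : Matrix m n ℝ → ℝ}
    {f' : Matrix m n ℝ → Matrix m n ℝ} {f'' : Matrix m n ℝ → Matrix m n ℝ → ℝ}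
    (hf : ∀ X V, HasLineDerivAt ℝ f ⟪f' X, V⟫ X V)
    (hf' : ∀ X V, HasLineDerivAt ℝ (fun Y => ⟪f' Y, V⟫) (f'' X V) X V)
    (hδ : ∀ X V : Matrix m n ℝ, X.rank ≤ k → V.rank ≤ k →
      (1 - δ) * ‖V‖ ^ 2 ≤ f'' X V ∧ f'' X V ≤ (1 + δ) * ‖V‖ ^ 2) :
    RankNearIdentity k δ f' := fun _ hK _ hA _ hB _ hZ =>
  abs_inner_sub_sub_sub_le_of_hasLineDerivAt hf hf'
    (fun X hX V hV => hδ X V (hK X hX) (hK V hV)) hA hB hZ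

namespace RankNearIdentity

variable {k : ℕ} {δ : ℝ}

theorem abs_inner_sub_le {g : Matrix m n ℝ → Matrix m n ℝ} (hg : RankNearIdentity k δ g)
    {K : Submodule ℝ (Matrix m n ℝ)} (hK : ∀ X ∈ K, X.rank ≤ k) {A B Z : Matrix m n ℝ}
    (hA : A ∈ K) (hB : B ∈ K) (hZ : Z ∈ K) :
    |⟪g A - g B, Z⟫| ≤ (1 + δ) * ‖A - B‖ * ‖Z‖ := by
  have h : |⟪g A - g B, Z⟫ - ⟪A - B, Z⟫| ≤ δ * ‖A - B‖ * ‖Z‖ := by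
    rw [← inner_sub_left]
    exact hg K hK A hA B hB Z hZ
  calc |⟪g A - g B, Z⟫| ≤ |⟪g A - g B, Z⟫ - ⟪A - B, Z⟫| + |⟪A - B, Z⟫| := by
        simpa using abs_add_le (⟪g A - g B, Z⟫ - ⟪A - B, Z⟫) ⟪A - B, Z⟫
    _ ≤ δ * ‖A - B‖ * ‖Z‖ + ‖A - B‖ * ‖Z‖ := add_le_add h (abs_real_inner_le_norm _ _)
    _ = (1 + δ) * ‖A - B‖ * ‖Z‖ := by ring

variable {g : Matrix m m ℝ → Matrix m m ℝ}

-- Aligned factors make `(Y₁ + Y)ᵀ (Y₁ - Y)` symmetric, so that the cross term in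
-- `‖Y₁Y₁ᵀ - YYᵀ‖²` is a square.
theorem mul_norm_sq_le_inner_of_isSymm (hg : RankNearIdentity (2 * Fintype.card n) δ g)
    (hδ : 0 ≤ δ) {Y₁ Y : Matrix m n ℝ} (hsymm : (Y₁ᵀ * Y).IsSymm) :
    (1 - 2 * δ) * ‖(Y₁ - Y) * (Y₁ + Y)ᵀ‖ ^ 2 ≤
      2 * ⟪g (Y₁ * Y₁ᵀ) - g (Y * Yᵀ), (Y₁ - Y) * (Y₁ + Y)ᵀ⟫ := by
  set Z := (Y₁ - Y) * (Y₁ + Y)ᵀ with hZ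
  have hYY : Yᵀ * Y₁ = Y₁ᵀ * Y := by simpa [IsSymm] using hsymm
  have hdiff : (2 : ℝ) • (Y₁ * Y₁ᵀ - Y * Yᵀ) = Z + Zᵀ := by
    simp only [hZ, transpose_mul, transpose_add, transpose_sub, transpose_transpose,
      Matrix.sub_mul, Matrix.mul_add]
    module
  have hcross : ⟪Zᵀ, Z⟫ = ‖(Y₁ + Y)ᵀ * (Y₁ - Y)‖ ^ 2 := by
    have hs : (Y₁ - Y)ᵀ * (Y₁ + Y) = (Y₁ + Y)ᵀ * (Y₁ - Y) := by
      simp only [transpose_add, transpose_sub, Matrix.add_mul, Matrix.sub_mul, Matrix.mul_add,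
        Matrix.mul_sub, hYY]
      abel
    rw [← real_inner_self_eq_norm_sq, hZ, transpose_mul, transpose_transpose, inner_mul_left_eq,
      ← Matrix.mul_assoc, ← hs, inner_mul_right_eq]
  have hinner : ‖Z‖ ^ 2 ≤ 2 * ⟪Y₁ * Y₁ᵀ - Y * Yᵀ, Z⟫ := by
    rw [← real_inner_smul_left, hdiff, inner_add_left, real_inner_self_eq_norm_sq, hcross]
    exact le_add_of_nonneg_right (sq_nonneg _)
  have hnorm : ‖Y₁ * Y₁ᵀ - Y * Yᵀ‖ ≤ ‖Z‖ := by
    have h := norm_add_le Z Zᵀ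
    rw [← hdiff, norm_smul, frobenius_norm_transpose, Real.norm_two] at h
    linarith
  have hmem : Z ∈ colMultiples m Y₁ Y := by
    rw [hZ, Matrix.sub_mul]
    exact sub_mem (mul_mem_colMultiples_left _ _ _) (mul_mem_colMultiples_right _ _ _)
  have h := hg _ (fun X => rank_le_of_mem_colMultiples) _ (mul_mem_colMultiples_left _ _ Y₁ᵀ) _
    (mul_mem_colMultiples_right _ _ Yᵀ) _ hmem
  rw [inner_sub_left] at h
  have := mul_le_mul_of_nonneg_right (mul_le_mul_of_nonneg_left hnorm hδ) (norm_nonneg Z)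
  linarith [neg_le_of_abs_le h]

theorem abs_inner_self_mul_transpose_le (hg : RankNearIdentity (2 * Fintype.card n) δ g)
    (hδ : 0 ≤ δ) [DecidableEq n] {Ys Y : Matrix m n ℝ} {s ρ : ℝ} (hs : 0 ≤ s)
    (hYs : Ysᵀ * Ys ≤ s ^ 2 • 1) (hY : ‖Ys - Y‖ ≤ ρ) (D : Matrix m n ℝ) :
    |⟪g (Y * Yᵀ), D * Dᵀ⟫| ≤ (kyFanTwoNorm (Fintype.card n) (g (Ys * Ysᵀ)) +
      (1 + δ) * ((2 * s + ρ) * ρ)) * ‖D‖ ^ 2 := by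
  -- Moving from `YYᵀ` to `YsYsᵀ` through `YYsᵀ` changes one factor at a time and keeps ranks low.
  have hg₀ := abs_inner_le_kyFanTwoNorm_mul_norm (g (Ys * Ysᵀ))
    ((rank_mul_le_left D Dᵀ).trans (rank_le_card_width D))
  have hg₁ := hg.abs_inner_sub_le (fun _ => rank_le_of_mem_rowMultiples)
    (mul_mem_rowMultiples_left Ys Ysᵀ Dᵀ) (mul_mem_rowMultiples_left Y Ysᵀ Dᵀ)
    (mul_mem_rowMultiples_right D Ysᵀ Dᵀ)
  have hg₂ := hg.abs_inner_sub_le (fun _ => rank_le_of_mem_colMultiples)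
    (mul_mem_colMultiples_left Y D Ysᵀ) (mul_mem_colMultiples_left Y D Yᵀ)
    (mul_mem_colMultiples_right Y D Dᵀ)
  rw [real_inner_comm] at hg₀
  have hsum : |⟪g (Y * Yᵀ), D * Dᵀ⟫| ≤ (kyFanTwoNorm (Fintype.card n) (g (Ys * Ysᵀ)) +
      (1 + δ) * (‖Ys * Ysᵀ - Y * Ysᵀ‖ + ‖Y * Ysᵀ - Y * Yᵀ‖)) * ‖D * Dᵀ‖ := by
    rw [inner_sub_left] at hg₁ hg₂
    rw [abs_le] at hg₀ hg₁ hg₂ ⊢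
    constructor <;> linarith
  have hDD : ‖D * Dᵀ‖ ≤ ‖D‖ ^ 2 := by
    simpa [frobenius_norm_transpose, pow_two] using frobenius_norm_mul D Dᵀ
  have hρ : 0 ≤ ρ := (norm_nonneg _).trans hY
  have hkyFan := kyFanTwoNorm_nonneg (Fintype.card n) (g (Ys * Ysᵀ))
  refine hsum.trans (mul_le_mul ?_ hDD (norm_nonneg _) (by positivity))
  have := norm_mul_transpose_sub_add_norm_mul_transpose_sub_le hs hYs hY
  gcongr

theorem mul_norm_sub_le_norm_sub_of_smul_one_le (hg : RankNearIdentity (2 * Fintype.card n) δ g)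
    (hδ : 0 ≤ δ) (hδ2 : 2 * δ ≤ 1) [DecidableEq n] {Y₁ Y : Matrix m n ℝ} {a E : ℝ} (ha : 0 ≤ a)
    (hY : a ^ 2 • 1 ≤ Y₁ᵀ * Y)
    (h₁ : |⟪g (Y₁ * Y₁ᵀ), (Y₁ - Y) * (Y₁ - Y)ᵀ⟫| ≤ E * ‖Y₁ - Y‖ ^ 2)
    (h₂ : |⟪g (Y * Yᵀ), (Y₁ - Y) * (Y₁ - Y)ᵀ⟫| ≤ E * ‖Y₁ - Y‖ ^ 2) :
    ((1 - 2 * δ) * a ^ 2 - E) * ‖Y₁ - Y‖ ≤ ‖g (Y₁ * Y₁ᵀ) * Y₁ - g (Y * Yᵀ) * Y‖ := by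
  have hsymm : (Y₁ᵀ * Y).IsSymm := by
    have h := (Matrix.le_iff.1 hY).isHermitian.add (isHermitian_one.smul (.all (a ^ 2)))
    rwa [sub_add_cancel] at h
  have hmono := mul_norm_sq_le_inner_of_isSymm hg hδ hsymm
  have hnorm := pow_le_pow_left₀ (by positivity)
    (mul_norm_le_norm_mul_add_transpose_of_smul_one_le hY (Y₁ - Y)) 2
  have hnorm' := mul_le_mul_of_nonneg_left hnorm (sub_nonneg.2 hδ2)
  have hexpand : 2 * ⟪g (Y₁ * Y₁ᵀ) * Y₁ - g (Y * Yᵀ) * Y, Y₁ - Y⟫ =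
      ⟪g (Y₁ * Y₁ᵀ) - g (Y * Yᵀ), (Y₁ - Y) * (Y₁ + Y)ᵀ⟫ +
        ⟪g (Y₁ * Y₁ᵀ), (Y₁ - Y) * (Y₁ - Y)ᵀ⟫ + ⟪g (Y * Yᵀ), (Y₁ - Y) * (Y₁ - Y)ᵀ⟫ := by
    simp only [inner_sub_left, inner_mul_right_eq, transpose_add, transpose_sub, Matrix.mul_add,
      Matrix.mul_sub, Matrix.sub_mul, inner_add_right, inner_sub_right]
    ring
  have hle : ((1 - 2 * δ) * a ^ 2 - E) * ‖Y₁ - Y‖ ^ 2 ≤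
      ⟪g (Y₁ * Y₁ᵀ) * Y₁ - g (Y * Yᵀ) * Y, Y₁ - Y⟫ := by
    linarith [neg_le_of_abs_le h₁, neg_le_of_abs_le h₂]
  rcases eq_or_ne (Y₁ - Y) 0 with h0 | h0
  · simp [h0]
  refine le_of_mul_le_mul_right ?_ (norm_pos_iff.2 h0)
  rw [mul_assoc, ← pow_two]
  exact hle.trans (real_inner_le_norm _ _)

end RankNearIdentity

/-- The constant of strong monotonicity of `Y ↦ ∇f(YYᵀ)Y` within distance `ρ` of a matrix with
singular values in `[σ, s]`, for parameter `δ` and low-rank gradient norm `N`. -/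
noncomputable def monotonicityModulus (δ σ s ρ N : ℝ) : ℝ :=
  (1 - 2 * δ) * (σ - ρ) ^ 2 - (N + (1 + δ) * ((2 * s + ρ) * ρ))

namespace RankNearIdentity

variable [DecidableEq n] {k : ℕ} {δ : ℝ} {g : Matrix m m ℝ → Matrix m m ℝ}
  {Ys Y₁ Y₂ : Matrix m n ℝ} {σ s ρ : ℝ}

theorem exists_monotonicityModulus_mul_norm_sub_le
    (hg : RankNearIdentity (2 * Fintype.card n) δ g) (hδ : 0 ≤ δ) (hδ2 : 2 * δ ≤ 1) (hσ : 0 < σ)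
    (hs : 0 ≤ s) (hρσ : 2 * ρ ≤ σ) (hYσ : σ ^ 2 • 1 ≤ Ysᵀ * Ys) (hYs : Ysᵀ * Ys ≤ s ^ 2 • 1)
    (h₁ : ‖Ys - Y₁‖ ≤ ρ) (h₂ : ‖Ys - Y₂‖ ≤ ρ) :
    ∃ Q ∈ orthogonalGroup n ℝ,
      monotonicityModulus δ σ s ρ (kyFanTwoNorm (Fintype.card n) (g (Ys * Ysᵀ))) * ‖Y₁ - Y₂ * Q‖ ≤
        ‖g (Y₁ * Y₁ᵀ) * Y₁ - g (Y₂ * Y₂ᵀ) * Y₂ * Q‖ := by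
  have hρ : 0 < σ - ρ := by linarith
  obtain ⟨Q, hQ, hle⟩ := exists_mem_orthogonalGroup_smul_one_le_mul_of_inner (M := Y₁ᵀ * Y₂)
    (pow_pos hρ 2) fun x => by
      rw [Matrix.mul_assoc, ← transpose_transpose Y₁, ← inner_mul_left_eq, transpose_transpose]
      exact mul_norm_sq_le_inner_mul_mul_of_norm_sub_le hYσ hρσ h₁ h₂ x
  refine ⟨Q, hQ, ?_⟩
  have hYQ : Y₂ * Q * (Y₂ * Q)ᵀ = Y₂ * Y₂ᵀ := mul_mul_transpose_of_mem_orthogonalGroup Y₂ hQ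
  rw [Matrix.mul_assoc] at hle
  have h := hg.mul_norm_sub_le_norm_sub_of_smul_one_le hδ hδ2 hρ.le hle
    (hg.abs_inner_self_mul_transpose_le hδ hs hYs h₁ _)
    (by rw [hYQ]; exact hg.abs_inner_self_mul_transpose_le hδ hs hYs h₂ _)
  rwa [hYQ, ← Matrix.mul_assoc] at h

theorem exists_monotonicityModulus_mul_norm_sub_le_of_exists
    (hg : RankNearIdentity (2 * Fintype.card n) δ g) (hδ : 0 ≤ δ) (hδ2 : 2 * δ ≤ 1) (hσ : 0 < σ)
    (hs : 0 ≤ s) (hρσ : 2 * ρ ≤ σ) (hYσ : σ ^ 2 • 1 ≤ Ysᵀ * Ys) (hYs : Ysᵀ * Ys ≤ s ^ 2 • 1)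
    (h₁ : ∃ R ∈ orthogonalGroup n ℝ, ‖Ys - Y₁ * R‖ ≤ ρ)
    (h₂ : ∃ R ∈ orthogonalGroup n ℝ, ‖Ys - Y₂ * R‖ ≤ ρ) :
    ∃ Q ∈ orthogonalGroup n ℝ,
      monotonicityModulus δ σ s ρ (kyFanTwoNorm (Fintype.card n) (g (Ys * Ysᵀ))) * ‖Y₁ - Y₂ * Q‖ ≤
        ‖g (Y₁ * Y₁ᵀ) * Y₁ - g (Y₂ * Y₂ᵀ) * Y₂ * Q‖ := by
  obtain ⟨R₁, hR₁, h₁⟩ := h₁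
  obtain ⟨R₂, hR₂, h₂⟩ := h₂
  obtain ⟨Q, hQ, h⟩ :=
    hg.exists_monotonicityModulus_mul_norm_sub_le hδ hδ2 hσ hs hρσ hYσ hYs h₁ h₂
  have hmul (A B : Matrix m n ℝ) : ‖A * R₁ - B * R₂ * Q‖ = ‖A - B * (R₂ * Q * R₁ᵀ)‖ := by
    rw [← norm_mul_of_mem_orthogonalGroup (A - _) hR₁, Matrix.sub_mul]
    simp only [Matrix.mul_assoc, (mem_orthogonalGroup_iff' n ℝ).1 hR₁, Matrix.mul_one]
  refine ⟨R₂ * Q * R₁ᵀ, mul_mem (mul_mem hR₂ hQ) (Unitary.star_mem hR₁), ?_⟩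
  rw [← hmul, ← hmul]
  rwa [mul_mul_transpose_of_mem_orthogonalGroup Y₁ hR₁,
    mul_mul_transpose_of_mem_orthogonalGroup Y₂ hR₂, ← Matrix.mul_assoc, ← Matrix.mul_assoc] at h

end RankNearIdentity

end NearIdentity

section Bridge

variable {p r : ℕ}

theorem trInner_eq_inner {m n : ℕ} (A B : Matrix (Fin m) (Fin n) ℝ) : trInner A B = ⟪A, B⟫ := by
  simp [trInner, inner_eq_trace, trace, mul_apply, Finset.sum_comm (γ := Fin m)]

theorem frob_eq_norm {m n : ℕ} (A : Matrix (Fin m) (Fin n) ℝ) : frob A = ‖A‖ := by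
  simp [frob, frobenius_norm_def, Real.sqrt_eq_rpow]

theorem isOrtho_iff_mem_orthogonalGroup {Q : Matrix (Fin r) (Fin r) ℝ} :
    IsOrtho Q ↔ Q ∈ orthogonalGroup (Fin r) ℝ :=
  (mem_orthogonalGroup_iff' (Fin r) ℝ).symm

theorem isCompact_orthogonalGroup [DecidableEq n] :
    IsCompact (orthogonalGroup n ℝ : Set (Matrix n n ℝ)) := by
  refine Metric.isCompact_of_isClosed_isBounded isClosed_unitary
    (isBounded_iff_forall_norm_le.2 ⟨‖(1 : Matrix n n ℝ)‖, fun Q hQ => ?_⟩)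
  rw [← norm_mul_of_mem_orthogonalGroup 1 hQ, Matrix.one_mul]

theorem dOrth_le_norm_sub_mul (Y₁ Y₂ : Matrix (Fin p) (Fin r) ℝ) {Q : Matrix (Fin r) (Fin r) ℝ}
    (hQ : Q ∈ orthogonalGroup (Fin r) ℝ) : dOrth Y₁ Y₂ ≤ ‖Y₁ - Y₂ * Q‖ := by
  refine csInf_le ⟨0, ?_⟩ ⟨Q, isOrtho_iff_mem_orthogonalGroup.2 hQ, ?_⟩
  · rintro _ ⟨R, -, rfl⟩
    exact Real.sqrt_nonneg _
  · rw [frob_eq_norm, norm_sub_rev]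

theorem exists_norm_mul_sub_eq_dOrth (Y₁ Y₂ : Matrix (Fin p) (Fin r) ℝ) :
    ∃ Q ∈ orthogonalGroup (Fin r) ℝ, ‖Y₂ * Q - Y₁‖ = dOrth Y₁ Y₂ := by
  have hset : {c : ℝ | ∃ Q : Matrix (Fin r) (Fin r) ℝ, IsOrtho Q ∧ c = frob (Y₂ * Q - Y₁)} =
      (fun Q : Matrix (Fin r) (Fin r) ℝ => ‖Y₂ * Q - Y₁‖) '' orthogonalGroup (Fin r) ℝ := by
    ext c
    simp only [isOrtho_iff_mem_orthogonalGroup, frob_eq_norm, Set.mem_ofPred_eq, Set.mem_image,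
      SetLike.mem_coe, eq_comm]
  have hcont : Continuous fun Q : Matrix (Fin r) (Fin r) ℝ => ‖Y₂ * Q - Y₁‖ := by fun_prop
  rw [dOrth, hset]
  exact (isCompact_orthogonalGroup.image hcont).sInf_mem (Set.Nonempty.image _ ⟨1, one_mem _⟩)

theorem dOrth_self (Y : Matrix (Fin p) (Fin r) ℝ) : dOrth Y Y = 0 := by
  obtain ⟨Q, -, hQ⟩ := exists_norm_mul_sub_eq_dOrth Y Y
  refine le_antisymm ?_ (hQ ▸ norm_nonneg _)
  simpa using dOrth_le_norm_sub_mul Y Y (one_mem (orthogonalGroup (Fin r) ℝ))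

theorem exists_norm_sub_mul_eq_dOrth (Y₁ Y₂ : Matrix (Fin p) (Fin r) ℝ) :
    ∃ Q ∈ orthogonalGroup (Fin r) ℝ, ‖Y₂ - Y₁ * Q‖ = dOrth Y₁ Y₂ := by
  obtain ⟨Q, hQ, h⟩ := exists_norm_mul_sub_eq_dOrth Y₁ Y₂
  refine ⟨Qᵀ, Unitary.star_mem hQ, ?_⟩
  rw [← h, ← norm_mul_of_mem_orthogonalGroup (Y₂ - Y₁ * Qᵀ) hQ, Matrix.sub_mul, Matrix.mul_assoc,
    (mem_orthogonalGroup_iff' (Fin r) ℝ).1 hQ, Matrix.mul_one]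

theorem eigVal_card_smul_one_le {A : Matrix (Fin r) (Fin r) ℝ} (hA : A.IsHermitian) :
    eigVal A r • 1 ≤ A := by
  rw [← Algebra.algebraMap_eq_smul_one, algebraMap_le_iff_le_spectrum hA,
    hA.spectrum_real_eq_range_eigenvalues]
  rintro _ ⟨i, rfl⟩
  have hr : r - r < r := by have := i.pos; omega
  obtain ⟨j, rfl⟩ := (Tuple.sort hA.eigenvalues).surjective i
  rw [eigVal, dif_pos hA, dif_pos hr]
  exact Tuple.monotone_sort hA.eigenvalues (Fin.mk_le_mk.2 (by omega))

theorem le_eigVal_one_smul_one {A : Matrix (Fin r) (Fin r) ℝ} (hA : A.IsHermitian) :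
    A ≤ eigVal A 1 • 1 := by
  rw [← Algebra.algebraMap_eq_smul_one, le_algebraMap_iff_spectrum_le hA,
    hA.spectrum_real_eq_range_eigenvalues]
  rintro _ ⟨i, rfl⟩
  have hr : r - 1 < r := by have := i.pos; omega
  obtain ⟨j, rfl⟩ := (Tuple.sort hA.eigenvalues).surjective i
  rw [eigVal, dif_pos hA, dif_pos hr]
  exact Tuple.monotone_sort hA.eigenvalues (Fin.mk_le_mk.2 (by omega))

theorem eigVal_anti {A : Matrix (Fin r) (Fin r) ℝ} (hA : A.IsHermitian) {i j : ℕ} (hi : 1 ≤ i)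
    (hij : i ≤ j) : eigVal A j ≤ eigVal A i := by
  rcases r.eq_zero_or_pos with rfl | hr
  · simp [eigVal]
  have hri : r - i < r := by omega
  have hrj : r - j < r := by omega
  rw [eigVal, eigVal, dif_pos hA, dif_pos hA, dif_pos hri, dif_pos hrj]
  exact Tuple.monotone_sort hA.eigenvalues (Fin.mk_le_mk.2 (by omega))

theorem eigVal_nonneg {A : Matrix (Fin r) (Fin r) ℝ} (hA : A.PosSemidef) (i : ℕ) :
    0 ≤ eigVal A i := by
  rw [eigVal, dif_pos hA.isHermitian]
  split_ifs
  exacts [hA.eigenvalues_nonneg _, le_rfl]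

theorem sval_nonneg (Y : Matrix (Fin p) (Fin r) ℝ) (i : ℕ) : 0 ≤ sval Y i :=
  Real.sqrt_nonneg _

theorem sval_sq (Y : Matrix (Fin p) (Fin r) ℝ) (i : ℕ) : sval Y i ^ 2 = eigVal (Yᵀ * Y) i :=
  Real.sq_sqrt (eigVal_nonneg (posSemidef_conjTranspose_mul_self Y) i)

theorem sval_sq_smul_one_le (Y : Matrix (Fin p) (Fin r) ℝ) : sval Y r ^ 2 • 1 ≤ Yᵀ * Y := by
  rw [sval_sq]
  exact eigVal_card_smul_one_le (isHermitian_conjTranspose_mul_self Y)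

theorem le_sval_one_sq_smul_one (Y : Matrix (Fin p) (Fin r) ℝ) : Yᵀ * Y ≤ sval Y 1 ^ 2 • 1 := by
  rw [sval_sq]
  exact le_eigVal_one_smul_one (isHermitian_conjTranspose_mul_self Y)

theorem sval_anti (Y : Matrix (Fin p) (Fin r) ℝ) {i j : ℕ} (hi : 1 ≤ i) (hij : i ≤ j) :
    sval Y j ≤ sval Y i :=
  Real.sqrt_le_sqrt (eigVal_anti (isHermitian_conjTranspose_mul_self Y) hi hij)

theorem sval_card_pos (hr : 0 < r) {Y : Matrix (Fin p) (Fin r) ℝ} (hY : Y.rank = r) :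
    0 < sval Y r := by
  have hrr : r - r < r := by omega
  have hpos : (Yᵀ * Y).PosDef :=
    .conjTranspose_mul_self Y <| mulVec_injective_iff.2 <|
      linearIndependent_iff_card_eq_finrank_span.2 <| by
        rw [Fintype.card_fin, Set.finrank, ← rank_eq_finrank_span_cols, hY]
  rw [sval, eigVal, dif_pos hpos.isHermitian, dif_pos hrr]
  exact Real.sqrt_pos.2 (hpos.eigenvalues_pos _)

theorem one_le_sval_one_div_sval_card (hr : 0 < r) {Y : Matrix (Fin p) (Fin r) ℝ}
    (hY : Y.rank = r) : 1 ≤ sval Y 1 / sval Y r :=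
  (one_le_div (sval_card_pos hr hY)).2 (sval_anti Y le_rfl hr)

theorem sval_zero (Y : Matrix (Fin p) (Fin 0) ℝ) (i : ℕ) : sval Y i = 0 := by
  simp [sval, eigVal]

theorem div_sval_one_div_sval_card_le_one {Y : Matrix (Fin p) (Fin r) ℝ} (hY : Y.rank = r) {μ : ℝ}
    (hμ : μ ≤ 1) : μ / (sval Y 1 / sval Y r) ≤ 1 := by
  rcases r.eq_zero_or_pos with rfl | hr
  · simp [sval_zero]
  have hκ := one_le_sval_one_div_sval_card hr hY
  exact div_le_one_of_le₀ (hμ.trans hκ) (zero_le_one.trans hκ)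

end Bridge

section Scalar

-- Throughout, `ν` is `μ / κ`, so that `ν * κ` is `μ` and `ν * σ` is the radius of the region.

theorem three_mul_le_one_of_pos {κ ν τ₀ : ℝ} (hκ : 1 ≤ κ) (hν : 0 ≤ ν) (hν1 : ν ≤ 1)
    (hτ₀ : τ₀ = (1 - ν) ^ 2 - 7 * (ν * κ) / 3) (hτ₀_pos : 0 < τ₀) : 3 * ν ≤ 1 := by
  nlinarith [mul_le_mul_of_nonneg_left hκ hν]

theorem two_mul_le_one_of_le_div {δ κ ν τ₀ : ℝ} (hκ : 1 ≤ κ) (hν : 0 ≤ ν) (hν1 : ν ≤ 1)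
    (hτ₀ : τ₀ = (1 - ν) ^ 2 - 7 * (ν * κ) / 3)
    (hδτ₀ : δ ≤ τ₀ / (4 * (2 * (κ + ν) ^ 2 + 7 * (ν * κ) / 3))) : 2 * δ ≤ 1 := by
  have hκν : 0 ≤ ν * κ := by positivity
  have hτ₀_le : τ₀ ≤ 1 := by
    have := pow_le_one₀ (sub_nonneg.2 hν1) (sub_le_self 1 hν) (n := 2)
    linarith
  have hden : 1 ≤ (κ + ν) ^ 2 := one_le_pow₀ (by linarith)
  refine (mul_le_mul_of_nonneg_left (hδτ₀.trans ?_) two_pos.le).trans_eq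
    (mul_inv_cancel₀ two_ne_zero)
  rw [div_le_iff₀ (by positivity)]
  linarith

theorem half_mul_sq_le_monotonicityModulus {δ σ κ ν τ₀ N : ℝ} (hδ : 0 ≤ δ) (hκ : 1 ≤ κ)
    (hν : 0 ≤ ν) (hν3 : 3 * ν ≤ 1) (hτ₀ : τ₀ = (1 - ν) ^ 2 - 7 * (ν * κ) / 3)
    (hδτ₀ : δ ≤ τ₀ / (4 * (2 * (κ + ν) ^ 2 + 7 * (ν * κ) / 3))) (hN : N ≤ τ₀ * σ ^ 2 / 4) :
    τ₀ * σ ^ 2 / 2 ≤ monotonicityModulus δ σ (κ * σ) (ν * σ) N := by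
  have hκ0 : 0 < κ := by linarith
  rw [le_div_iff₀ (by positivity)] at hδτ₀
  have hcross : (2 * κ + ν) * ν ≤ 7 * (ν * κ) / 3 := by nlinarith
  have hsq : (1 - ν) ^ 2 ≤ (κ + ν) ^ 2 := pow_le_pow_left₀ (by linarith) (by linarith) 2
  have hδ_le : δ * (2 * (1 - ν) ^ 2 + (2 * κ + ν) * ν) ≤ τ₀ / 4 := by
    have := mul_le_mul_of_nonneg_left
      (add_le_add (mul_le_mul_of_nonneg_left hsq two_pos.le) hcross) hδ
    linarith
  have hcoef : τ₀ / 2 ≤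
      (1 - 2 * δ) * (1 - ν) ^ 2 - (τ₀ / 4 + (1 + δ) * ((2 * κ + ν) * ν)) := by
    linarith
  have := mul_le_mul_of_nonneg_right hcoef (sq_nonneg σ)
  rw [monotonicityModulus]
  linarith

end Scalar

section Main

variable {p r : ℕ}

theorem exists_mul_norm_sub_le_of_dOrth_le (hr : 0 < r)
    {g : Matrix (Fin p) (Fin p) ℝ → Matrix (Fin p) (Fin p) ℝ} {δ κ μ τ₀ : ℝ}
    (hg : RankNearIdentity (2 * r) δ g) (hδ : 0 ≤ δ) {Ystar : Matrix (Fin p) (Fin r) ℝ}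
    (hYstar : Ystar.rank = r) (hκ : κ = sval Ystar 1 / sval Ystar r) (hμ : 0 ≤ μ)
    (hμκ : μ / κ ≤ 1) (hτ₀ : τ₀ = (1 - μ / κ) ^ 2 - 7 * μ / 3) (hτ₀_pos : 0 < τ₀)
    (hδτ₀ : δ ≤ τ₀ / (4 * (2 * (κ + μ / κ) ^ 2 + 7 * μ / 3)))
    (hN : kyFanTwoNorm r (g (Ystar * Ystarᵀ)) ≤ τ₀ * sval Ystar r ^ 2 / 4)
    {Y₁ Y₂ : Matrix (Fin p) (Fin r) ℝ} (h₁ : dOrth Y₁ Ystar ≤ μ * sval Ystar r / κ)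
    (h₂ : dOrth Y₂ Ystar ≤ μ * sval Ystar r / κ) :
    ∃ Q ∈ orthogonalGroup (Fin r) ℝ, τ₀ * sval Ystar r ^ 2 / 2 * ‖Y₁ - Y₂ * Q‖ ≤
      ‖g (Y₁ * Y₁ᵀ) * Y₁ - g (Y₂ * Y₂ᵀ) * Y₂ * Q‖ := by
  have hσ : 0 < sval Ystar r := sval_card_pos hr hYstar
  have hκ1 : 1 ≤ κ := hκ ▸ one_le_sval_one_div_sval_card hr hYstar
  have hκ0 : 0 < κ := one_pos.trans_le hκ1
  have hs : sval Ystar 1 = κ * sval Ystar r := by rw [hκ, div_mul_cancel₀ _ hσ.ne']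
  obtain ⟨ν, rfl⟩ : ∃ ν, μ = ν * κ := ⟨μ / κ, (div_mul_cancel₀ μ hκ0.ne').symm⟩
  rw [mul_div_cancel_right₀ ν hκ0.ne'] at hμκ hτ₀ hδτ₀
  rw [mul_right_comm, mul_div_cancel_right₀ _ hκ0.ne'] at h₁ h₂
  have hν : 0 ≤ ν := nonneg_of_mul_nonneg_left hμ hκ0
  have hν3 : 3 * ν ≤ 1 := three_mul_le_one_of_pos hκ1 hν hμκ hτ₀ hτ₀_pos
  obtain ⟨R₁, hR₁, hd₁⟩ := exists_norm_sub_mul_eq_dOrth Y₁ Ystar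
  obtain ⟨R₂, hR₂, hd₂⟩ := exists_norm_sub_mul_eq_dOrth Y₂ Ystar
  have hg : RankNearIdentity (2 * Fintype.card (Fin r)) δ g := by rwa [Fintype.card_fin]
  obtain ⟨Q, hQ, h⟩ := hg.exists_monotonicityModulus_mul_norm_sub_le_of_exists hδ
    (two_mul_le_one_of_le_div hκ1 hν hμκ hτ₀ hδτ₀) hσ (sval_nonneg Ystar 1)
    (by rw [← mul_assoc]; exact mul_le_of_le_one_left hσ.le (by linarith))
    (sval_sq_smul_one_le Ystar) (le_sval_one_sq_smul_one Ystar)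
    ⟨R₁, hR₁, hd₁.trans_le h₁⟩ ⟨R₂, hR₂, hd₂.trans_le h₂⟩
  refine ⟨Q, hQ, le_trans ?_ h⟩
  rw [hs, Fintype.card_fin]
  gcongr
  exact half_mul_sq_le_monotonicityModulus hδ hκ1 hν hν3 hτ₀ hδτ₀ hN

theorem rankNearIdentity_of_trInner {k : ℕ} {f : Matrix (Fin p) (Fin p) ℝ → ℝ}
    {f' : Matrix (Fin p) (Fin p) ℝ → Matrix (Fin p) (Fin p) ℝ}
    {f'' : Matrix (Fin p) (Fin p) ℝ → Matrix (Fin p) (Fin p) ℝ → ℝ} {δ : ℝ}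
    (hf : ∀ X D, HasDerivAt (fun t : ℝ => f (X + t • D)) (trInner (f' X) D) 0)
    (hf' : ∀ X G, HasDerivAt (fun t : ℝ => trInner (f' (X + t • G)) G) (f'' X G) 0)
    (hδ : ∀ X G : Matrix (Fin p) (Fin p) ℝ, X.rank ≤ k → G.rank ≤ k →
      (1 - δ) * frob G ^ 2 ≤ f'' X G ∧ f'' X G ≤ (1 + δ) * frob G ^ 2) :
    RankNearIdentity k δ f' := by
  simp only [trInner_eq_inner, frob_eq_norm] at hf hf' hδ
  exact rankNearIdentity_of_hasLineDerivAt hf hf' hδ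

theorem sSup_trInner_eq_kyFanTwoNorm (k : ℕ) (A : Matrix (Fin p) (Fin p) ℝ) :
    sSup {c : ℝ | ∃ B : Matrix (Fin p) (Fin p) ℝ, B.rank ≤ k ∧ frob B ≤ 1 ∧ c = trInner B A} =
      kyFanTwoNorm k A := by
  simp only [trInner_eq_inner, frob_eq_norm, kyFanTwoNorm]

end Main

theorem stmt13_general {p r : ℕ}
    (f : Matrix (Fin p) (Fin p) ℝ → ℝ)
    (gradf : Matrix (Fin p) (Fin p) ℝ → Matrix (Fin p) (Fin p) ℝ)
    (hessf : Matrix (Fin p) (Fin p) ℝ → Matrix (Fin p) (Fin p) ℝ → ℝ)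
    (hgradf : ∀ X D : Matrix (Fin p) (Fin p) ℝ,
      HasDerivAt (fun t : ℝ => f (X + t • D)) (trInner (gradf X) D) 0)
    (hhessf : ∀ X G : Matrix (Fin p) (Fin p) ℝ,
      HasDerivAt (fun t : ℝ => trInner (gradf (X + t • G)) G) (hessf X G) 0)
    (δ : ℝ) (hδ0 : 0 ≤ δ)
    (hRSCS : ∀ X G : Matrix (Fin p) (Fin p) ℝ, X.rank ≤ 2 * r → G.rank ≤ 2 * r →
      (1 - δ) * (frob G) ^ 2 ≤ hessf X G ∧ hessf X G ≤ (1 + δ) * (frob G) ^ 2)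
    (Ystar : Matrix (Fin p) (Fin r) ℝ) (hYs : Ystar.rank = r)
    (X : Matrix (Fin p) (Fin p) ℝ) (hX : X = Ystar * Ystarᵀ)
    (N : ℝ) (hN : N = sSup {c : ℝ | ∃ B : Matrix (Fin p) (Fin p) ℝ,
      B.rank ≤ r ∧ frob B ≤ 1 ∧ c = trInner B (gradf X)})
    (κ : ℝ) (hκ : κ = sval Ystar 1 / sval Ystar r)
    (μ : ℝ) (hμ0 : 0 ≤ μ) (hμκ : μ / κ ≤ 1)
    (τ₀ : ℝ) (hτ₀ : τ₀ = (1 - μ / κ) ^ 2 - 7 * μ / 3) (hτpos : 0 < τ₀)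
    (hδle : δ ≤ τ₀ / (4 * (2 * (κ + μ / κ) ^ 2 + 7 * μ / 3)))
    (hNle : N ≤ τ₀ * (sval Ystar r) ^ 2 / 4)
    (Yhat : Matrix (Fin p) (Fin r) ℝ)
    (hYhatd : dOrth Yhat Ystar ≤ μ * sval Ystar r / κ)
    (hYhatFOSP : gradf (Yhat * Yhatᵀ) * Yhat = 0) :
    (∀ Yhat' : Matrix (Fin p) (Fin r) ℝ,
      dOrth Yhat' Ystar ≤ μ * sval Ystar r / κ →
      gradf (Yhat' * Yhat'ᵀ) * Yhat' = 0 →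
      ∃ Q : Matrix (Fin r) (Fin r) ℝ, IsOrtho Q ∧ Yhat' = Yhat * Q) ∧
    dOrth Yhat Ystar ≤ 2 / (τ₀ * (sval Ystar r) ^ 2) * frob (gradf X * Ystar) ∧
    2 / (τ₀ * (sval Ystar r) ^ 2) * frob (gradf X * Ystar) ≤
      2 * sval Ystar 1 / (τ₀ * (sval Ystar r) ^ 2) * N := by
  rcases r.eq_zero_or_pos with rfl | hr
  · refine ⟨fun _ _ _ => ⟨1, by simp [IsOrtho], Subsingleton.elim _ _⟩, ?_, by simp [sval_zero]⟩
    simpa [sval_zero] using hYhatd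
  have hσ : 0 < τ₀ * sval Ystar r ^ 2 := mul_pos hτpos (pow_pos (sval_card_pos hr hYs) 2)
  rw [sSup_trInner_eq_kyFanTwoNorm] at hN
  subst hX hN
  have hmono {Y₁ Y₂ : Matrix (Fin p) (Fin r) ℝ} := exists_mul_norm_sub_le_of_dOrth_le hr
    (rankNearIdentity_of_trInner hgradf hhessf hRSCS) hδ0 hYs hκ hμ0 hμκ hτ₀ hτpos hδle hNle
    (Y₁ := Y₁) (Y₂ := Y₂)
  have hYsd : dOrth Ystar Ystar ≤ μ * sval Ystar r / κ := by
    rw [dOrth_self, hκ]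
    exact div_nonneg (mul_nonneg hμ0 (sval_nonneg _ _))
      (div_nonneg (sval_nonneg _ _) (sval_nonneg _ _))
  refine ⟨fun Yhat' hd hFOSP => ?_, ?_, ?_⟩
  · obtain ⟨Q, hQ, h⟩ := hmono hd hYhatd
    rw [hFOSP, hYhatFOSP, Matrix.zero_mul, sub_zero, norm_zero] at h
    exact ⟨Q, isOrtho_iff_mem_orthogonalGroup.2 hQ, sub_eq_zero.1 <| norm_le_zero_iff.1 <|
      nonpos_of_mul_nonpos_right h (half_pos hσ)⟩
  · obtain ⟨Q, hQ, h⟩ := hmono hYhatd hYsd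
    rw [hYhatFOSP, zero_sub, norm_neg, norm_mul_of_mem_orthogonalGroup _ hQ,
      ← le_inv_mul_iff₀ (half_pos hσ), inv_div] at h
    rw [frob_eq_norm]
    exact (dOrth_le_norm_sub_mul Yhat Ystar hQ).trans h
  · have h := norm_mul_le_mul_kyFanTwoNorm (gradf (Ystar * Ystarᵀ)) (sval_nonneg Ystar 1)
      (le_sval_one_sq_smul_one Ystar)
    rw [Fintype.card_fin, ← frob_eq_norm] at h
    rw [mul_div_right_comm, mul_assoc]
    gcongr

end LowRankFactorization

/-- a Riemannian first-order stationary point of `h` in the strong convexity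
region is unique up to orthogonal transformation and is close to `Ystar`, with error controlled
by the gradient of `f` at `X = Ystar Ystarᵀ`. -/
theorem stmt13 {p r : ℕ}
    (f : Matrix (Fin p) (Fin p) ℝ → ℝ)
    (gradf : Matrix (Fin p) (Fin p) ℝ → Matrix (Fin p) (Fin p) ℝ)
    (hessf : Matrix (Fin p) (Fin p) ℝ → Matrix (Fin p) (Fin p) ℝ → ℝ)
    (hgradf : ∀ X D : Matrix (Fin p) (Fin p) ℝ,
      HasDerivAt (fun t : ℝ => f (X + t • D)) (trInner (gradf X) D) 0)
    (hhessf : ∀ X G : Matrix (Fin p) (Fin p) ℝ,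
      HasDerivAt (fun t : ℝ => trInner (gradf (X + t • G)) G) (hessf X G) 0)
    (δ : ℝ) (hδ0 : 0 ≤ δ) (hδ1 : δ < 1)
    (hRSCS : ∀ X G : Matrix (Fin p) (Fin p) ℝ, X.rank ≤ 2 * r → G.rank ≤ 4 * r →
      (1 - δ) * (frob G) ^ 2 ≤ hessf X G ∧ hessf X G ≤ (1 + δ) * (frob G) ^ 2)
    (Ystar : Matrix (Fin p) (Fin r) ℝ) (hYs : Ystar.rank = r)
    (X : Matrix (Fin p) (Fin p) ℝ) (hX : X = Ystar * Ystarᵀ)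
    (N : ℝ) (hN : N = sSup {c : ℝ | ∃ B : Matrix (Fin p) (Fin p) ℝ,
      B.rank ≤ r ∧ frob B ≤ 1 ∧ c = trInner B (gradf X)})
    (κ : ℝ) (hκ : κ = sval Ystar 1 / sval Ystar r)
    (μ : ℝ) (hμ0 : 0 ≤ μ) (hμ1 : μ ≤ 1 / 3)
    (τ₀ : ℝ) (hτ₀ : τ₀ = (1 - μ / κ) ^ 2 - 7 * μ / 3) (hτpos : 0 < τ₀)
    (hδle : δ ≤ τ₀ / (4 * (2 * (κ + μ / κ) ^ 2 + 7 * μ / 3)))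
    (hNle : N ≤ τ₀ * (sval Ystar r) ^ 2 / 4)
    (Yhat : Matrix (Fin p) (Fin r) ℝ) (hYhat : Yhat.rank = r)
    (hYhatd : dOrth Yhat Ystar ≤ μ * sval Ystar r / κ)
    (hYhatFOSP : gradf (Yhat * Yhatᵀ) * Yhat = 0) :
    (∀ Yhat' : Matrix (Fin p) (Fin r) ℝ, Yhat'.rank = r →
      dOrth Yhat' Ystar ≤ μ * sval Ystar r / κ →
      gradf (Yhat' * Yhat'ᵀ) * Yhat' = 0 →
      ∃ Q : Matrix (Fin r) (Fin r) ℝ, IsOrtho Q ∧ Yhat' = Yhat * Q) ∧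
    dOrth Yhat Ystar ≤ 2 / (τ₀ * (sval Ystar r) ^ 2) * frob (gradf X * Ystar) ∧
    2 / (τ₀ * (sval Ystar r) ^ 2) * frob (gradf X * Ystar) ≤
      2 * sval Ystar 1 / (τ₀ * (sval Ystar r) ^ 2) * N := by
  have hμκ : μ / κ ≤ 1 := hκ ▸ div_sval_one_div_sval_card_le_one hYs (by linarith)
  exact (stmt13_general f gradf hessf hgradf hhessf δ hδ0
    (fun X G hX hG => hRSCS X G hX (hG.trans (by omega))) Ystar hYs X hX N hN κ hκ μ hμ0 hμκ
    τ₀ hτ₀ hτpos hδle hNle Yhat hYhatd hYhatFOSP).imp_left fun h Yhat' _ => h Yhat'
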